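/- (Hybrid consistency is preserved by the HPDR rule INDUCTION.) Suppose the hybrid configuration ⟨M ∣ R₀,…,R_N; R_rem; N⟩ is consistent, i + 1 ≤ N, and a frame R : Q → Val → Prop satisfies: for all q and σ, F_H(fun q' σ' => R_i q' σ' ∧ R q' σ') q σ implies R q σ. Then the hybrid configuration ⟨∅ ∣ R₀', …, R_N'; R_rem; N⟩ is consistent, where R_j' = fun q σ => R_j q σ ∧ R q σ for 1 ≤ j ≤ i + 1 and R_j' = R_j for j = 0 and i + 1 < j ≤ N. -/

import Mathlib

/-- The flow transition `σ →_{f,ψ} σ'`: there is a solution of the ODE `ẋ = f(x)`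
from `σ` to `σ'` along which `ψ` holds at every point after the start. -/
def FlowTrans {V : Type*} [Fintype V]
    (f : (V → ℝ) → (V → ℝ)) (ψ : (V → ℝ) → Prop) (σ σ' : V → ℝ) : Prop :=
  ∃ (t' : ℝ) (x : ℝ → V → ℝ), 0 ≤ t' ∧ x 0 = σ ∧ x t' = σ' ∧
    (∀ t ∈ Set.Icc (0 : ℝ) t', HasDerivAt x (f (x t)) t) ∧
    (∀ t ∈ Set.Ioc (0 : ℝ) t', ψ (x t))

/-- The continuous reachability predicate `⟨f, ψ⟩φ'` holds at `σ`. -/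
def CRP {V : Type*} [Fintype V]
    (f : (V → ℝ) → (V → ℝ)) (ψ : (V → ℝ) → Prop) (φ' : (V → ℝ) → Prop)
    (σ : V → ℝ) : Prop :=
  ∃ σ', FlowTrans f ψ σ σ' ∧ φ' σ'

/-- The jump transition `⟨q, σ₁⟩ →δ ⟨q', σ₂⟩`. -/
def Jump {Q V : Type*}
    (δ : Set (Q × ((V → ℝ) → Prop) × ((V → ℝ) → (V → ℝ) → Prop) × Q))
    (q : Q) (σ₁ : V → ℝ) (q' : Q) (σ₂ : V → ℝ) : Prop :=
  ∃ φ φc, (q, φ, φc, q') ∈ δ ∧ φ σ₁ ∧ φc σ₁ σ₂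

/-- The hybrid forward predicate transformer `F_H` of the HA `(Q, q₀, φ₀, Flow, Inv, δ)`. -/
def FH {Q V : Type*} [Fintype V] (q₀ : Q) (φ₀ : (V → ℝ) → Prop)
    (Flow : Q → (V → ℝ) → (V → ℝ)) (Inv : Q → (V → ℝ) → Prop)
    (δ : Set (Q × ((V → ℝ) → Prop) × ((V → ℝ) → (V → ℝ) → Prop) × Q))
    (R : Q → (V → ℝ) → Prop) : Q → (V → ℝ) → Prop :=
  fun q' σ₂ => (q' = q₀ ∧ φ₀ σ₂) ∨
    ∃ q φ φc σ₁, (q, φ, φc, q') ∈ δ ∧ R q σ₁ ∧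
      CRP (Flow q) (Inv q) (fun σI => φ σI ∧ φc σI σ₂) σ₁

/-- The continuous forward predicate transformer `F_cont`. -/
def Fcont {Q V : Type*} [Fintype V]
    (Flow : Q → (V → ℝ) → (V → ℝ)) (Inv : Q → (V → ℝ) → Prop)
    (R : Q → (V → ℝ) → Prop) : Q → (V → ℝ) → Prop :=
  fun q' σ₂ => ∃ σ₁, R q' σ₁ ∧ FlowTrans (Flow q') (Inv q') σ₁ σ₂

/-- Consistency of an HPDR hybrid configuration `⟨M ∣ R₀,…,R_N; R_rem; N⟩`.
Frames are given as `R : ℕ → Q → (V → ℝ) → Prop` (only indices `≤ N` matter)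
together with the remainder frame `Rrem`.  The trace `M` is a list of triples
`(σ, q, ι)` where `ι : Option ℕ`: `some i` is the level `i` and `none` is `rem`. -/
structure HConsistent {Q V : Type*} [Fintype V] (q₀ : Q) (φ₀ : (V → ℝ) → Prop)
    (Flow : Q → (V → ℝ) → (V → ℝ)) (Inv : Q → (V → ℝ) → Prop)
    (δ : Set (Q × ((V → ℝ) → Prop) × ((V → ℝ) → (V → ℝ) → Prop) × Q))
    (φP : (V → ℝ) → Prop)
    (R : ℕ → Q → (V → ℝ) → Prop) (Rrem : Q → (V → ℝ) → Prop) (N : ℕ)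
    (M : List ((V → ℝ) × Q × Option ℕ)) : Prop where
  /-- (Con-A): `R₀` at `q₀` is the initial condition… -/
  conA₁ : ∀ σ, R 0 q₀ σ ↔ φ₀ σ
  /-- (Con-A): …and is `False` at other locations. -/
  conA₂ : ∀ q, q ≠ q₀ → ∀ σ, ¬ R 0 q σ
  /-- (Con-B-1): the frames are increasing. -/
  conB₁ : ∀ i, i < N → ∀ q σ, R i q σ → R (i + 1) q σ
  /-- (Con-B-2): the last frame is below the remainder frame. -/
  conB₂ : ∀ q σ, R N q σ → Rrem q σ
  /-- (Con-C): frames below `N` are safe. -/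
  conC : ∀ i, i < N → ∀ q σ, R i q σ → φP σ
  /-- (Con-D-1): frames are closed under `F_H`. -/
  conD₁ : ∀ i, i < N → ∀ q σ, FH q₀ φ₀ Flow Inv δ (R i) q σ → R (i + 1) q σ
  /-- (Con-D-2): the remainder frame is closed under `F_cont` from `R_N`. -/
  conD₂ : ∀ q σ, Fcont Flow Inv (R N) q σ → Rrem q σ
  /-- (Con-E): `rem`-level trace entries are in `R_rem` and violate safety. -/
  conE : ∀ σ q, (σ, q, (none : Option ℕ)) ∈ M → Rrem q σ ∧ ¬ φP σ
  /-- (Con-F-1): consecutive trace entries at levels `i`, `i+1` are connected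
  by a flow transition followed by a jump transition. -/
  conF₁ : ∀ k i (σ₁ : V → ℝ) (q₁ : Q) (σ₂ : V → ℝ) (q₂ : Q), i < N →
    M[k]? = some (σ₁, q₁, some i) → M[k + 1]? = some (σ₂, q₂, some (i + 1)) →
    ∃ φ φc, (q₁, φ, φc, q₂) ∈ δ ∧ R i q₁ σ₁ ∧
      CRP (Flow q₁) (Inv q₁) (fun σI => φ σI ∧ φc σI σ₂) σ₁
  /-- (Con-F-2): consecutive trace entries at levels `N`, `rem` are connected
  by a flow transition. -/
  conF₂ : ∀ k (σ₁ : V → ℝ) (q₁ : Q) (σ₂ : V → ℝ) (q₂ : Q),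
    M[k]? = some (σ₁, q₁, some N) → M[k + 1]? = some (σ₂, q₂, (none : Option ℕ)) →
    q₁ = q₂ ∧ R N q₁ σ₁ ∧ FlowTrans (Flow q₁) (Inv q₁) σ₁ σ₂

/-- Hybrid consistency is preserved by the HPDR rule INDUCTION. -/
theorem hconsistent_induction {Q V : Type*} [Fintype V]
    (q₀ : Q) (φ₀ : (V → ℝ) → Prop)
    (Flow : Q → (V → ℝ) → (V → ℝ)) (Inv : Q → (V → ℝ) → Prop)
    (δ : Set (Q × ((V → ℝ) → Prop) × ((V → ℝ) → (V → ℝ) → Prop) × Q))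
    (φP : (V → ℝ) → Prop)
    (R : ℕ → Q → (V → ℝ) → Prop) (Rrem : Q → (V → ℝ) → Prop) (N i : ℕ)
    (M : List ((V → ℝ) × Q × Option ℕ))
    (Rg : Q → (V → ℝ) → Prop)
    (hcons : HConsistent q₀ φ₀ Flow Inv δ φP R Rrem N M)
    (hiN : i + 1 ≤ N)
    (hind : ∀ q σ,
      FH q₀ φ₀ Flow Inv δ (fun q' σ' => R i q' σ' ∧ Rg q' σ') q σ → Rg q σ) :
    HConsistent q₀ φ₀ Flow Inv δ φP
      (fun j => if 1 ≤ j ∧ j ≤ i + 1 then (fun q σ => R j q σ ∧ Rg q σ) else R j)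
      Rrem N ([] : List ((V → ℝ) × Q × Option ℕ)) := by
  have hmono : ∀ (A B : Q → (V → ℝ) → Prop), (∀ q σ, A q σ → B q σ) → ∀ q σ,
      FH q₀ φ₀ Flow Inv δ A q σ → FH q₀ φ₀ Flow Inv δ B q σ := by
    rintro A B h q σ (h0 | ⟨p, φ, φc, σ₁, hd, hA, hc⟩)
    · exact Or.inl h0
    · exact Or.inr ⟨p, φ, φc, σ₁, hd, h _ _ hA, hc⟩
  have h0 : ∀ q σ, R 0 q σ → Rg q σ := by
    intro q σ h
    by_cases hq : q = q₀
    · subst hq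
      exact hind _ _ (Or.inl ⟨rfl, (hcons.conA₁ σ).1 h⟩)
    · exact absurd h (hcons.conA₂ q hq σ)
  have hle : ∀ a b, a ≤ b → b ≤ N → ∀ q σ, R a q σ → R b q σ := by
    intro a b hab
    induction b, hab using Nat.le_induction with
    | base => intro _ q σ h; exact h
    | succ b _ ih => intro hb q σ h; exact hcons.conB₁ b (by omega) q σ (ih (by omega) q σ h)
  obtain ⟨R', hR'⟩ : ∃ R' : ℕ → Q → (V → ℝ) → Prop, R' =
    (fun j => if 1 ≤ j ∧ j ≤ i + 1 then (fun q σ => R j q σ ∧ Rg q σ) else R j) := ⟨_, rfl⟩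
  rw [← hR']
  have hz : R' 0 = R 0 := by simp [hR']
  have hsub : ∀ j q σ, R' j q σ → R j q σ := by
    intro j q σ h
    rw [hR'] at h
    split_ifs at h
    · exact h.1
    · exact h
  have hg : ∀ j, j ≤ i + 1 → ∀ q σ, R' j q σ → Rg q σ := by
    intro j hj q σ h
    rcases Nat.eq_zero_or_pos j with rfl | hp
    · rw [hz] at h; exact h0 q σ h
    · rw [hR'] at h
      rw [if_pos ⟨hp, hj⟩] at h
      exact h.2
  have hmk : ∀ j q σ, R j q σ → (j ≤ i + 1 → Rg q σ) → R' j q σ := by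
    intro j q σ h h'
    rw [hR']
    dsimp only
    split_ifs with hc
    · exact ⟨h, h' hc.2⟩
    · exact h
  refine ⟨?_, ?_, ?_, ?_, ?_, ?_, ?_, ?_, ?_, ?_⟩
  · rw [hz]; exact hcons.conA₁
  · rw [hz]; exact hcons.conA₂
  · intro j hj q σ h
    exact hmk _ _ _ (hcons.conB₁ j hj q σ (hsub _ _ _ h)) (fun hc => hg j (by omega) q σ h)
  · intro q σ h; exact hcons.conB₂ q σ (hsub _ _ _ h)
  · intro j hj q σ h; exact hcons.conC j hj q σ (hsub _ _ _ h)
  · intro j hj q σ h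
    refine hmk _ _ _ (hcons.conD₁ j hj q σ (hmono _ _ (hsub j) q σ h)) (fun hc => ?_)
    refine hind q σ (hmono _ _ (fun p τ hp => ⟨?_, hg j (by omega) p τ hp⟩) q σ h)
    exact hle j i (by omega) (by omega) p τ (hsub _ _ _ hp)
  · rintro q σ ⟨σ₁, h, hf⟩
    exact hcons.conD₂ q σ ⟨σ₁, hsub _ _ _ h, hf⟩
  · intro σ q h; simp at h
  · intro k j σ₁ q₁ σ₂ q₂ _ h; simp at h
  · intro k σ₁ q₁ σ₂ q₂ h; simp at h
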